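/- Let M be an R-module. The assignments ρ ↦ ∇_ρ := ρ − (m ↦ m ⊗ g) and ∇ ↦ ρ_∇ := ∇ + (m ↦ m ⊗ g) are mutually inverse bijections between (i) the set of right C-comodule structures ρ on M, and (ii) the set of flat connections on M, i.e. R-linear maps ∇ : M → M ⊗[R] C whose range is contained in the image of the canonical map M ⊗[R] (ker ε) → M ⊗[R] C and which satisfy ∇¹ ∘ ∇ = 0, where ∇¹ : M ⊗[R] C → M ⊗[R] C ⊗[R] C is given on elementary tensors by ∇¹(m ⊗ c) = ∇(m) ⊗ c + m ⊗ (g ⊗ c − Δ(c) + c ⊗ g). -/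

import Mathlib

open TensorProduct

variable {R C M : Type*} [CommRing R] [AddCommGroup C] [Module R C] [Coalgebra R C]
  [AddCommGroup M] [Module R M]

/-- The linear map `m ↦ m ⊗ g`. -/
noncomputable def tmulGrouplike (M : Type*) [AddCommGroup M] [Module R M]
    (g : C) : M →ₗ[R] M ⊗[R] C :=
  (TensorProduct.mk R M C).flip g

/-- A right `C`-comodule structure on `M`: an `R`-linear map `ρ : M → M ⊗ C`
satisfying the counit law and coassociativity. -/
def IsComodStruct (rho : M →ₗ[R] M ⊗[R] C) : Prop :=
  (∀ m : M, TensorProduct.rid R M ((Coalgebra.counit (R := R)).lTensor M (rho m)) = m) ∧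
  (TensorProduct.assoc R M C C).toLinearMap.comp ((rho.rTensor C).comp rho) =
    ((Coalgebra.comul (R := R)).lTensor M).comp rho

/-- The degree-one Amitsur differential `d¹ : C → C ⊗ C`, `c ↦ g ⊗ c − Δ(c) + c ⊗ g`. -/
noncomputable def amitsurD1 (g : C) : C →ₗ[R] C ⊗[R] C :=
  TensorProduct.mk R C C g - Coalgebra.comul (R := R) + (TensorProduct.mk R C C).flip g

/-- The extension `∇¹ : M ⊗ C → M ⊗ (C ⊗ C)` of a connection `∇` by the Leibniz rule:
`∇¹(m ⊗ c) = ∇(m) ⊗ c + m ⊗ (g ⊗ c − Δ(c) + c ⊗ g)`. -/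
noncomputable def connectionExt (g : C) (nabla : M →ₗ[R] M ⊗[R] C) :
    M ⊗[R] C →ₗ[R] M ⊗[R] (C ⊗[R] C) :=
  (TensorProduct.assoc R M C C).toLinearMap.comp (nabla.rTensor C) +
    (amitsurD1 (R := R) g).lTensor M

/-- A flat connection on `M`: an `R`-linear map `∇ : M → M ⊗ C` with values in the
image of `M ⊗ (ker ε) → M ⊗ C` and vanishing curvature `∇¹ ∘ ∇ = 0`. -/
noncomputable def IsFlatConnection (g : C) (nabla : M →ₗ[R] M ⊗[R] C) : Prop :=
  (∀ m : M, nabla m ∈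
      LinearMap.range
        ((Submodule.subtype (LinearMap.ker (Coalgebra.counit (R := R) (A := C)))).lTensor M)) ∧
  (connectionExt g nabla).comp nabla = 0

/-!
The two assignments are visibly inverse to each other, so it remains to match the axioms. Put
`ρ = ∇ + (m ↦ m ⊗ g)`.

Since `ε g = 1`, the counit is surjective, so right exactness of `M ⊗ -` identifies the image of
`M ⊗ ker ε` in `M ⊗ C` with `ker (id ⊗ ε)`. As `(id ⊗ ε) (m ⊗ g) = m ⊗ 1`, the counit law for `ρ`
says that `(id ⊗ ε) ∘ ∇ = 0`.

Since `Δ g = g ⊗ g`, the terms `m ⊗ g ⊗ g` in `(ρ ⊗ id) ∘ ρ - (id ⊗ Δ) ∘ ρ` cancel and what is left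
is the curvature `∇¹ ∘ ∇`.
-/

lemma surjective_of_apply_eq_one {N : Type*} [AddCommGroup N] [Module R N] (f : N →ₗ[R] R) {x : N}
    (hx : f x = 1) : Function.Surjective f :=
  fun r => ⟨r • x, by rw [map_smul, hx, smul_eq_mul, mul_one]⟩

lemma range_lTensor_subtype_ker {N P : Type*} [AddCommGroup N] [Module R N] [AddCommGroup P]
    [Module R P] (f : N →ₗ[R] P) (hf : Function.Surjective f) :
    LinearMap.range ((LinearMap.ker f).subtype.lTensor M) = LinearMap.ker (f.lTensor M) :=
  (lTensor_exact M f.exact_subtype_ker_map hf).linearMap_ker_eq.symm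

lemma rid_lTensor_counit_tmulGrouplike {g : C} (hg : Coalgebra.counit (R := R) g = 1) (m : M) :
    TensorProduct.rid R M ((Coalgebra.counit (R := R)).lTensor M (tmulGrouplike M g m)) = m := by
  simp [tmulGrouplike, hg]

lemma counit_law_add_tmulGrouplike_iff_mem_range {g : C}
    (hg : Coalgebra.counit (R := R) g = 1) (nabla : M →ₗ[R] M ⊗[R] C) (m : M) :
    TensorProduct.rid R M
        ((Coalgebra.counit (R := R)).lTensor M
          ((nabla + tmulGrouplike M g : M →ₗ[R] M ⊗[R] C) m)) = m ↔
      nabla m ∈ LinearMap.range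
        ((LinearMap.ker (Coalgebra.counit (R := R) (A := C))).subtype.lTensor M) := by
  rw [range_lTensor_subtype_ker _ (surjective_of_apply_eq_one _ hg), LinearMap.mem_ker,
    LinearMap.add_apply, map_add, map_add, rid_lTensor_counit_tmulGrouplike hg, add_eq_right,
    LinearEquiv.map_eq_zero_iff]

/-- The failure `(ρ ⊗ id) ∘ ρ - (id ⊗ Δ) ∘ ρ` of coassociativity of `ρ : M → M ⊗ C`, with values
in `M ⊗ (C ⊗ C)`. -/
noncomputable def coassocDefect (rho : M →ₗ[R] M ⊗[R] C) : M →ₗ[R] M ⊗[R] (C ⊗[R] C) :=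
  (TensorProduct.assoc R M C C).toLinearMap ∘ₗ rho.rTensor C ∘ₗ rho -
    (Coalgebra.comul (R := R)).lTensor M ∘ₗ rho

lemma lTensor_comul_comp_tmulGrouplike {g : C}
    (hg : Coalgebra.comul (R := R) g = g ⊗ₜ[R] g) :
    (Coalgebra.comul (R := R)).lTensor M ∘ₗ tmulGrouplike M g =
      (TensorProduct.assoc R M C C).toLinearMap ∘ₗ
        tmulGrouplike (M ⊗[R] C) g ∘ₗ tmulGrouplike M g := by
  ext m
  simp [tmulGrouplike, hg]

lemma rTensor_comp_tmulGrouplike {N P : Type*} [AddCommGroup N] [Module R N] [AddCommGroup P]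
    [Module R P] (f : M →ₗ[R] N) (x : P) :
    f.rTensor P ∘ₗ tmulGrouplike M x = tmulGrouplike N x ∘ₗ f :=
  f.rTensor_comp_flip_mk P x

lemma assoc_comp_rTensor_tmulGrouplike {N P : Type*} [AddCommGroup N] [Module R N]
    [AddCommGroup P] [Module R P] (x : N) :
    (TensorProduct.assoc R M N P).toLinearMap ∘ₗ (tmulGrouplike M x).rTensor P =
      (TensorProduct.mk R N P x).lTensor M :=
  TensorProduct.ext' fun _ _ => rfl

lemma assoc_comp_tmulGrouplike {N P : Type*} [AddCommGroup N] [Module R N]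
    [AddCommGroup P] [Module R P] (x : P) :
    (TensorProduct.assoc R M N P).toLinearMap ∘ₗ tmulGrouplike (M ⊗[R] N) x =
      (tmulGrouplike N x).lTensor M :=
  TensorProduct.ext' fun _ _ => rfl

lemma connectionExt_eq_rTensor_sub_lTensor_add (g : C) (nabla : M →ₗ[R] M ⊗[R] C) :
    connectionExt g nabla =
      (TensorProduct.assoc R M C C).toLinearMap ∘ₗ (nabla + tmulGrouplike M g).rTensor C -
        (Coalgebra.comul (R := R)).lTensor M +
        (TensorProduct.assoc R M C C).toLinearMap ∘ₗ tmulGrouplike (M ⊗[R] C) g := by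
  rw [connectionExt, amitsurD1, LinearMap.lTensor_add, LinearMap.lTensor_sub,
    LinearMap.rTensor_add, LinearMap.comp_add, assoc_comp_rTensor_tmulGrouplike,
    assoc_comp_tmulGrouplike, tmulGrouplike]
  abel

lemma coassocDefect_add_tmulGrouplike {g : C} (hg : Coalgebra.comul (R := R) g = g ⊗ₜ[R] g)
    (nabla : M →ₗ[R] M ⊗[R] C) :
    coassocDefect (nabla + tmulGrouplike M g) = connectionExt g nabla ∘ₗ nabla := by
  have rTensor_add_comp : (nabla + tmulGrouplike M g).rTensor C ∘ₗ tmulGrouplike M g =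
      tmulGrouplike (M ⊗[R] C) g ∘ₗ nabla +
        tmulGrouplike (M ⊗[R] C) g ∘ₗ tmulGrouplike M g := by
    rw [rTensor_comp_tmulGrouplike, LinearMap.comp_add]
  rw [coassocDefect, connectionExt_eq_rTensor_sub_lTensor_add]
  simp only [LinearMap.comp_add, LinearMap.add_comp, LinearMap.sub_comp, LinearMap.comp_assoc,
    rTensor_add_comp, lTensor_comul_comp_tmulGrouplike hg]
  abel

lemma isComodStruct_add_tmulGrouplike_iff {g : C} (hg : IsGroupLikeElem R g)
    (nabla : M →ₗ[R] M ⊗[R] C) :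
    IsComodStruct (nabla + tmulGrouplike M g) ↔ IsFlatConnection g nabla := by
  refine and_congr
    (forall_congr' (counit_law_add_tmulGrouplike_iff_mem_range hg.counit_eq_one nabla)) ?_
  rw [← coassocDefect_add_tmulGrouplike hg.comul_eq_tmul_self, coassocDefect, sub_eq_zero]

/-- Let `R` be a commutative ring, `C` a coassociative counital
`R`-coalgebra, `g ∈ C` grouplike (`Δ g = g ⊗ g`, `ε g = 1`) and `M` an `R`-module.
The assignments `ρ ↦ ∇_ρ = ρ − (m ↦ m ⊗ g)` and `∇ ↦ ρ_∇ = ∇ + (m ↦ m ⊗ g)` are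
mutually inverse bijections between right `C`-comodule structures on `M` and flat
connections on `M`. -/
theorem comodule_structures_equiv_flat_connections
    (g : C) (hg₁ : Coalgebra.comul (R := R) g = g ⊗ₜ[R] g)
    (hg₂ : Coalgebra.counit (R := R) g = (1 : R)) :
    (∀ rho : M →ₗ[R] M ⊗[R] C, IsComodStruct rho →
        IsFlatConnection g (rho - tmulGrouplike M g)) ∧
    (∀ nabla : M →ₗ[R] M ⊗[R] C, IsFlatConnection g nabla →
        IsComodStruct (nabla + tmulGrouplike M g)) ∧
    (∀ rho : M →ₗ[R] M ⊗[R] C, (rho - tmulGrouplike M g) + tmulGrouplike M g = rho) ∧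
    (∀ nabla : M →ₗ[R] M ⊗[R] C, (nabla + tmulGrouplike M g) - tmulGrouplike M g = nabla) := by
  have hg : IsGroupLikeElem R g := ⟨hg₂, hg₁⟩
  refine ⟨fun rho hrho => ?_, fun nabla => (isComodStruct_add_tmulGrouplike_iff hg nabla).mpr,
    fun rho => sub_add_cancel rho _, fun nabla => add_sub_cancel_right nabla _⟩
  rwa [← isComodStruct_add_tmulGrouplike_iff hg, sub_add_cancel]
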